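/- For k₀ = 1 and c > 0, the function M(r) = (3c + √(3c² + 6cr³))/((r³ − c)r) defined for r > 0, r³ ≠ c, satisfies the k₀ = 1 reduced ODE obtained by substituting N = (−M²r − 2M)/(2 + 2Mr) into the field equations, i.e., M solves the resulting first-order ODE for M. -/

import Mathlib

/-!
The first field equation minus half the second is algebraic, and it is exactly the relation that
defines `N` from `M`. So only the second equation is left; in the scale-invariant variable
`u = r * M` it becomes `2 * r * u' * (u + 2) = -u * (u ^ 2 + 6 * u + 6)` up to a factor `u`.
This separable equation has the first integral `c = r ^ 3 * u ^ 2 / (u ^ 2 + 6 * u + 6)`. For fixed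
`c` the integral is a quadratic equation for `u`, and the explicit `M` are its two roots divided
by `r`.
-/

open Filter Topology

/-- The two field equations for `k₀ = 1` at the radius `r`, where `M = μ'` and `N = ν'` are the
derivatives of the metric exponents. -/
def FieldEquationsAt (M N : ℝ → ℝ) (r : ℝ) : Prop :=
  ((M r) ^ 2 + 2 * M r * N r + (M r + N r) / r
    - (1/2) * (deriv N r + (N r) ^ 2 + deriv M r) = 0)
  ∧
  ((M r) ^ 2 - deriv M r - (deriv N r + (N r) ^ 2) + 2 * M r * N r = 0)

/-- The function `N` that the algebraic consequence of the field equations assigns to `M`;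
meaningful where `1 + r * M r ≠ 0`. -/
noncomputable def reducedN (M : ℝ → ℝ) (r : ℝ) : ℝ :=
  (-(M r) ^ 2 * r - 2 * M r) / (2 + 2 * M r * r)

/-- The first-order equation for `u = r * M r` to which the field equations reduce once `N` is
eliminated, as a relation between `r`, `u` and the derivative `u'`. -/
def ReducedEquation (r u u' : ℝ) : Prop :=
  2 * r * u' * (u + 2) + u * (u ^ 2 + 6 * u + 6) = 0

/-- The explicit solution with parameter `c`. The two branches of the square root are `σ = 1` and
`σ = -1`. -/
noncomputable def explicitM (c σ r : ℝ) : ℝ :=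
  (3 * c + σ * √(3 * c ^ 2 + 6 * c * r ^ 3)) / ((r ^ 3 - c) * r)

/-- The first integral of the reduced equation, as a relation between the radius `r` and
`u = r * M r`: it is `c = r ^ 3 * u ^ 2 / (u ^ 2 + 6 * u + 6)` with denominators cleared. -/
def FirstIntegral (c r u : ℝ) : Prop :=
  u ^ 2 * (r ^ 3 - c) = 6 * c * (u + 1)

section Reduction

variable {M : ℝ → ℝ} {m r : ℝ}

lemma reducedN_constraint (hr : r ≠ 0) (hu : 1 + M r * r ≠ 0) :
    (M r) ^ 2 + 2 * M r * reducedN M r + 2 * ((M r + reducedN M r) / r) = 0 := by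
  have hden : 2 + 2 * M r * r = 2 * (1 + M r * r) := by ring
  rw [reducedN, hden]
  field_simp
  ring

lemma hasDerivAt_reducedN (hM : HasDerivAt M m r) (hu : 1 + M r * r ≠ 0) :
    HasDerivAt (reducedN M)
      (-(2 * M r * m * r + (M r) ^ 2 + 2 * m + 2 * reducedN M r * (m * r + M r))
        / (2 + 2 * M r * r)) r := by
  have hden : 2 + 2 * M r * r ≠ 0 := fun h => hu (by linarith)
  have hnum : HasDerivAt (fun y => -(M y) ^ 2 * y - 2 * M y)
      (-(2 * M r * m * r + (M r) ^ 2 + 2 * m)) r :=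
    (((hM.fun_pow 2).fun_neg.fun_mul (hasDerivAt_id' r)).fun_sub (hM.const_mul 2)).congr_deriv
      (by push_cast; ring)
  have hdenom : HasDerivAt (fun y => 2 + 2 * M y * y) (2 * (m * r + M r)) r :=
    (((hM.const_mul 2).fun_mul (hasDerivAt_id' r)).const_add 2).congr_deriv (by ring)
  refine (hnum.div hdenom hden).congr_deriv ?_
  rw [reducedN]
  field_simp
  ring

lemma second_equation_reducedN (hM : HasDerivAt M m r) (hr : r ≠ 0) (hu : 1 + M r * r ≠ 0) :
    (M r) ^ 2 - deriv M r - (deriv (reducedN M) r + (reducedN M r) ^ 2) + 2 * M r * reducedN M r =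
      -(M r * (2 * r * (m * r + M r) * (M r * r + 2)
        + M r * r * ((M r * r) ^ 2 + 6 * (M r * r) + 6))) / (4 * r * (1 + M r * r) ^ 2) := by
  have hden : 2 + 2 * M r * r = 2 * (1 + M r * r) := by ring
  rw [(hasDerivAt_reducedN hM hu).deriv, hM.deriv, reducedN, hden]
  field_simp
  ring

theorem fieldEquationsAt_reducedN_iff (hM : HasDerivAt M m r) (hr : r ≠ 0)
    (hu : 1 + M r * r ≠ 0) :
    FieldEquationsAt M (reducedN M) r ↔
      M r = 0 ∨ ReducedEquation r (M r * r) (m * r + M r) := by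
  have hfirst_of_second :
      (M r) ^ 2 - deriv M r - (deriv (reducedN M) r + (reducedN M r) ^ 2)
        + 2 * M r * reducedN M r = 0 →
      (M r) ^ 2 + 2 * M r * reducedN M r + (M r + reducedN M r) / r
        - (1/2) * (deriv (reducedN M) r + (reducedN M r) ^ 2 + deriv M r) = 0 := fun h => by
    linear_combination (1 / 2) * h + (1 / 2) * reducedN_constraint hr hu
  have hden : 4 * r * (1 + M r * r) ^ 2 ≠ 0 := by positivity
  rw [FieldEquationsAt, and_iff_right_of_imp hfirst_of_second,
    second_equation_reducedN hM hr hu, div_eq_zero_iff, or_iff_left hden, neg_eq_zero,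
    mul_eq_zero, ReducedEquation]

end Reduction

namespace FirstIntegral

variable {c r : ℝ}

lemma one_add_ne_zero {u : ℝ} (h : FirstIntegral c r u) (hrc : r ^ 3 ≠ c) : 1 + u ≠ 0 := by
  intro hu
  rw [FirstIntegral, eq_neg_of_add_eq_zero_right hu] at h
  exact hrc (by linarith)

lemma reducedEquation {u : ℝ → ℝ} {u' : ℝ} (hu : HasDerivAt u u' r) (hc : c ≠ 0)
    (h : ∀ᶠ y in 𝓝 r, FirstIntegral c y (u y)) :
    ReducedEquation r (u r) u' := by
  have h_at : (u r) ^ 2 * (r ^ 3 - c) = 6 * c * (u r + 1) := h.self_of_nhds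
  have h_deriv : 2 * u r * u' * (r ^ 3 - c) + (u r) ^ 2 * (3 * r ^ 2) = 6 * c * u' := by
    have h_lhs := (hu.pow 2).mul ((hasDerivAt_pow 3 r).sub_const c)
    have h_rhs := (hu.add_const 1).const_mul (6 * c)
    simpa using h_lhs.unique (h_rhs.congr_of_eventuallyEq h)
  have h_elim : 2 * c * u' * (u r + 2) = -r ^ 2 * (u r) ^ 3 := by
    linear_combination (1 / 3) * u r * h_deriv - (2 / 3) * u' * h_at
  rw [ReducedEquation]
  apply mul_left_cancel₀ hc
  linear_combination r * h_elim - u r * h_at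

end FirstIntegral

section Explicit

variable {c σ r : ℝ}

lemma firstIntegral_explicitM (hσ : σ ^ 2 = 1) (hr : r ≠ 0) (hrc : r ^ 3 ≠ c)
    (hrad : 0 ≤ 3 * c ^ 2 + 6 * c * r ^ 3) : FirstIntegral c r (explicitM c σ r * r) := by
  have ha : r ^ 3 - c ≠ 0 := sub_ne_zero.mpr hrc
  have hdiscrim : discrim (r ^ 3 - c) (-(6 * c)) (-(6 * c)) =
      (2 * σ * √(3 * c ^ 2 + 6 * c * r ^ 3)) * (2 * σ * √(3 * c ^ 2 + 6 * c * r ^ 3)) := by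
    rw [discrim]
    linear_combination -4 * σ ^ 2 * Real.sq_sqrt hrad - 4 * (3 * c ^ 2 + 6 * c * r ^ 3) * hσ
  have hroot := (quadratic_eq_zero_iff ha hdiscrim (explicitM c σ r * r)).mpr <| .inl <| by
    rw [explicitM]
    field_simp
    ring
  rw [FirstIntegral]
  linear_combination hroot

lemma differentiableAt_explicitM (hr : r ≠ 0) (hrc : r ^ 3 ≠ c)
    (hrad : 3 * c ^ 2 + 6 * c * r ^ 3 ≠ 0) : DifferentiableAt ℝ (explicitM c σ) r := by
  have hden : (r ^ 3 - c) * r ≠ 0 := mul_ne_zero (sub_ne_zero.mpr hrc) hr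
  unfold explicitM
  fun_prop (disch := assumption)

lemma eventually_firstIntegral_explicitM (hσ : σ ^ 2 = 1) (hr : r ≠ 0) (hrc : r ^ 3 ≠ c)
    (hrad : 0 < 3 * c ^ 2 + 6 * c * r ^ 3) :
    ∀ᶠ y in 𝓝 r, FirstIntegral c y (explicitM c σ y * y) := by
  have hrad_cont : Continuous fun y : ℝ => 3 * c ^ 2 + 6 * c * y ^ 3 := by fun_prop
  filter_upwards [eventually_ne_nhds hr, (continuous_pow 3).continuousAt.eventually_ne hrc,
    hrad_cont.continuousAt.eventually_const_lt hrad] with y hy hyc hyrad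
  exact firstIntegral_explicitM hσ hy hyc hyrad.le

end Explicit

theorem k0_eq_one_explicit_solution_general {c σ r : ℝ} (hσ : σ ^ 2 = 1) (hr : r ≠ 0)
    (hrc : r ^ 3 ≠ c) (hrad : 0 < 3 * c ^ 2 + 6 * c * r ^ 3) :
    FieldEquationsAt (explicitM c σ) (reducedN (explicitM c σ)) r := by
  have hc : c ≠ 0 := by
    rintro rfl
    simp at hrad
  have hM := (differentiableAt_explicitM (σ := σ) hr hrc hrad.ne').hasDerivAt
  have hu : HasDerivAt (fun y => explicitM c σ y * y)
      (deriv (explicitM c σ) r * r + explicitM c σ r) r :=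
    (hM.fun_mul (hasDerivAt_id' r)).congr_deriv (by ring)
  have hint := eventually_firstIntegral_explicitM hσ hr hrc hrad
  rw [fieldEquationsAt_reducedN_iff hM hr (hint.self_of_nhds.one_add_ne_zero hrc)]
  exact .inr (FirstIntegral.reducedEquation (u := fun y => explicitM c σ y * y) hu hc hint)

theorem k0_eq_one_explicit_solution (c : ℝ) (hc : 0 < c)
    (M N : ℝ → ℝ)
    (hM : M = fun r => (3*c + Real.sqrt (3*c^2 + 6*c*r^3)) / ((r^3 - c) * r))
    (hN : N = fun r => (-(M r)^2 * r - 2 * M r) / (2 + 2 * M r * r)) :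
    ∀ r : ℝ, 0 < r → r^3 ≠ c →
      ((M r)^2 + 2 * M r * N r + (M r + N r) / r
        - (1/2) * (deriv N r + (N r)^2 + deriv M r) = 0)
      ∧
      ((M r)^2 - deriv M r - (deriv N r + (N r)^2) + 2 * M r * N r = 0) := by
  obtain rfl : M = explicitM c 1 := hM.trans (funext fun r => by rw [explicitM, one_mul])
  obtain rfl : N = reducedN (explicitM c 1) := hN
  exact fun r hr hrc => k0_eq_one_explicit_solution_general (one_pow 2) hr.ne' hrc (by positivity)
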